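/- Let q be a prime power and let r, δ, w, N be positive integers with δ > 1 and q ≥ N > 1. Let s and i be integers with 0 ≤ s < r and 0 ≤ i ≤ δ, and set k = wr - s. Let C_1 = ⋯ = C_{N-1} be [n, k, δ]_q codes and let C_N be an [n, k-i, δ+i]_q code, and suppose C_1 and C_N are both optimal (r,δ)-LRCs with C_N ⊆ C_1. Let C = (C_1,...,C_N)·A be the matrix-product code, where A is an N×N NSC matrix over F_q. If Ns + i < r, then C is an optimal (r,δ)-LRC with parameters [Nn, Nk - i, δ + i]_q. -/

import Mathlib

namespace LRCPaper

noncomputable section Defs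

variable {F : Type} [Field F] [Fintype F] [DecidableEq F]

/-- The punctured code of `C` on the coordinate set `S`: delete all coordinates outside `S`. -/
def punctureCode {ι : Type} [Fintype ι] (C : Submodule F (ι → F)) (S : Finset ι) :
    Submodule F ({ x // x ∈ S } → F) :=
  C.map (LinearMap.funLeft F F (fun j : { x // x ∈ S } => (j : ι)))

/-- Every nonzero codeword of `C` has Hamming weight at least `δ`
(i.e. the minimum distance of `C` is at least `δ`). -/
def minWtGe {ι : Type} [Fintype ι] (C : Submodule F (ι → F)) (δ : ℕ) : Prop :=
  ∀ c ∈ C, c ≠ 0 → δ ≤ hammingNorm c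

/-- The minimum Hamming distance of the linear code `C` is exactly `d`. -/
def minDistIs {ι : Type} [Fintype ι] (C : Submodule F (ι → F)) (d : ℕ) : Prop :=
  (∃ c ∈ C, c ≠ 0 ∧ hammingNorm c = d) ∧ minWtGe C d

/-- The `i`-th code symbol of `C` has `(r, δ)`-locality. -/
def symbolHasLocality {ι : Type} [Fintype ι] (C : Submodule F (ι → F)) (r δ : ℕ) (i : ι) :
    Prop :=
  ∃ S : Finset ι, i ∈ S ∧ S.card ≤ r + δ - 1 ∧ minWtGe (punctureCode C S) δ

/-- `C` is an `(r, δ)`-locally repairable code. -/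
def IsLRC {ι : Type} [Fintype ι] (C : Submodule F (ι → F)) (r δ : ℕ) : Prop :=
  ∀ i : ι, symbolHasLocality C r δ i

/-- The right-hand side `n - k + 1 - (⌈k/r⌉ - 1)(δ - 1)` of the Singleton-type bound
for `(r, δ)`-LRCs, as an integer. -/
def optBound (n k r δ : ℕ) : ℤ :=
  (n : ℤ) - (k : ℤ) + 1 - (⌈(k : ℚ) / (r : ℚ)⌉ - 1) * ((δ : ℤ) - 1)

/-- `C` is an optimal `(r, δ)`-LRC with parameters `[card ι, k, d]`. -/
def IsOptimalLRC {ι : Type} [Fintype ι] (C : Submodule F (ι → F)) (k d r δ : ℕ) : Prop :=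
  IsLRC C r δ ∧ Module.finrank F ↥C = k ∧ minDistIs C d ∧
    (d : ℤ) = optBound (Fintype.card ι) k r δ

/-- `C` is an optimal `(r, δ)`-LRC (its minimum distance meets the Singleton-type bound). -/
def IsOptimalLRCCode {ι : Type} [Fintype ι] (C : Submodule F (ι → F)) (r δ : ℕ) : Prop :=
  IsLRC C r δ ∧ ∃ d : ℕ, minDistIs C d ∧
    (d : ℤ) = optBound (Fintype.card ι) (Module.finrank F ↥C) r δ

/-- The linear map underlying the matrix-product construction: it sends
`(c_1, …, c_M)` to `(∑_ℓ c_ℓ a_{ℓ,1}, …, ∑_ℓ c_ℓ a_{ℓ,N})`. -/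
def mpMap {ι : Type} [Fintype ι] {M N : ℕ} (A : Matrix (Fin M) (Fin N) F) :
    (Fin M → ι → F) →ₗ[F] (Fin N × ι → F) where
  toFun c := fun p => ∑ ℓ : Fin M, c ℓ p.2 * A ℓ p.1
  map_add' x y := by
    funext p
    simp [add_mul, Finset.sum_add_distrib]
  map_smul' a x := by
    funext p
    simp [Finset.mul_sum, mul_assoc]

/-- The matrix-product code `(C_1, …, C_M) · A`, a linear code of length `N * card ι`
with coordinates indexed by `Fin N × ι`. -/
def matrixProductCode {ι : Type} [Fintype ι] {M N : ℕ}
    (Cs : Fin M → Submodule F (ι → F)) (A : Matrix (Fin M) (Fin N) F) :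
    Submodule F (Fin N × ι → F) :=
  (Submodule.pi Set.univ Cs).map (mpMap A)

/-- The linear code of length `N` generated by the first `i` rows of `A`. -/
def rowSpanCode {M N : ℕ} (A : Matrix (Fin M) (Fin N) F) (i : ℕ) :
    Submodule F (Fin N → F) :=
  Submodule.span F {w : Fin N → F | ∃ ℓ : Fin M, (ℓ : ℕ) < i ∧ w = A ℓ}

/-- `A` is nonsingular by columns (NSC): for every `i ≤ M`, every `i × i` submatrix
formed by choosing `i` columns of the first `i` rows of `A` is nonsingular. -/
def IsNSC {M N : ℕ} (A : Matrix (Fin M) (Fin N) F) : Prop :=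
  ∀ (i : ℕ) (hi : i ≤ M) (f : Fin i → Fin N), StrictMono f →
    (Matrix.of fun a b : Fin i => A (Fin.castLE hi a) (f b)).det ≠ 0

/-- Evaluation map underlying generalized Reed–Solomon codes:
`p ↦ (v_1 p(a_1), …, v_n p(a_n))`. -/
def grsMap {n : ℕ} (a v : Fin n → F) : Polynomial F →ₗ[F] (Fin n → F) where
  toFun p := fun i => v i * Polynomial.eval (a i) p
  map_add' p q := by funext i; simp [mul_add]
  map_smul' c p := by funext i; simp [mul_left_comm]

/-- The generalized Reed–Solomon code `GRS_k(a, v)`. -/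
def GRSCode {n : ℕ} (k : ℕ) (a v : Fin n → F) : Submodule F (Fin n → F) :=
  (Polynomial.degreeLT F k).map (grsMap a v)

/-- The set of indices of nonzero columns of `H`. -/
def colSupport {m n : ℕ} (H : Matrix (Fin m) (Fin n) F) : Finset (Fin n) :=
  Finset.univ.filter fun j => ∃ i, H i j ≠ 0

/-- Entry `(i, j)` (0-based) of the `2(δ-1) × (2m-1)` matrix `Ĥ`, built from the distinct
elements `α 0, …, α (m-1)` and nonzero scalars `lam 0, …, lam (m-1)`. -/
def hatEntry (δ m : ℕ) (α lam : ℕ → F) (i j : ℕ) : F :=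
  if i < δ - 1 then (if j < m then lam j * α j ^ i else 0)
  else (if m - 1 ≤ j then lam (2 * m - 2 - j) * α (2 * m - 2 - j) ^ (i - (δ - 1)) else 0)

/-- Entry `(i, j)` (0-based) of the `v(δ-1) × (vm-1)` block-diagonal matrix
`ℋ = H ⊕ ⋯ ⊕ H ⊕ Ĥ` (`v - 2` diagonal copies of `H` followed by `Ĥ`). -/
def calHEntry (δ m v : ℕ) (α lam : ℕ → F) (i j : ℕ) : F :=
  if i < (v - 2) * (δ - 1) then
    (if j < (v - 2) * m ∧ j / m = i / (δ - 1) then lam (j % m) * α (j % m) ^ (i % (δ - 1))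
      else 0)
  else
    (if (v - 2) * m ≤ j then hatEntry δ m α lam (i - (v - 2) * (δ - 1)) (j - (v - 2) * m)
      else 0)

/-- Entry `(i, j)` (0-based) of the `(v(δ-1)+τ) × (vm-1)` matrix `H̃`, obtained by appending
the row block `(A, …, A, Â)` below `ℋ`. -/
def tildeHEntry (δ m v : ℕ) (α lam : ℕ → F) (i j : ℕ) : F :=
  if i < v * (δ - 1) then calHEntry δ m v α lam i j
  else
    lam (if j < (v - 2) * m then j % m
          else (if j - (v - 2) * m < m then j - (v - 2) * m
                else 2 * m - 2 - (j - (v - 2) * m))) *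
      α (if j < (v - 2) * m then j % m
          else (if j - (v - 2) * m < m then j - (v - 2) * m
                else 2 * m - 2 - (j - (v - 2) * m))) ^
        ((δ - 1) + (i - v * (δ - 1)))

end Defs

/-!
Write a word of the matrix-product code as blocks `y_j = ∑_ℓ a_{ℓ,j} c_ℓ`. Every block lies in
`C_1`, so the repair sets of `C_1` serve inside each block. If two blocks are nonzero, the weight is
at least `2δ ≥ δ + t`. If only block `j` is nonzero, then `c_N = (A⁻¹)_{j,N} y_j`; up to sign the
coefficient is a minor of the first `N - 1` rows divided by `det A`, hence nonzero, so `y_j ∈ C_N`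
and the weight is at least `δ + t`. A minimum-weight word of `C_N` placed in a single block attains
this. As `Ns + t < r`, the ceiling in the Singleton-type bound is `w` for `C_1` and `Nw` for the
matrix-product code, so the identity `n - k = w(δ - 1)` expressing the optimality of `C_1` scales
by `N` to the one required.
-/

open Function

theorem finrank_pi_univ {K κ : Type*} [DivisionRing K] [Fintype κ] {V : κ → Type*}
    [∀ i, AddCommGroup (V i)] [∀ i, Module K (V i)] [∀ i, FiniteDimensional K (V i)]
    (p : ∀ i, Submodule K (V i)) :
    Module.finrank K (Submodule.pi Set.univ p) = ∑ i, Module.finrank K (p i) := by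
  let e : Submodule.pi Set.univ p ≃ₗ[K] ∀ i, p i :=
    { Equiv.Set.univPi fun i => (p i : Set (V i)) with
      map_add' := fun _ _ => rfl
      map_smul' := fun _ _ => rfl }
  rw [e.finrank_eq, Module.finrank_pi_fintype]

section Blocks

variable {F : Type} [Field F] {ι : Type} [Fintype ι] {L M N : ℕ}

theorem curry_mpMap (A : Matrix (Fin M) (Fin N) F) (c : Fin M → ι → F) (j : Fin N) :
    curry (mpMap A c) j = ∑ l, A l j • c l := by
  ext x
  simp only [curry_apply, mpMap, LinearMap.coe_mk, AddHom.coe_mk, Finset.sum_apply, Pi.smul_apply,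
    smul_eq_mul, mul_comm]

theorem mpMap_curry_mpMap (A : Matrix (Fin L) (Fin M) F) (B : Matrix (Fin M) (Fin N) F)
    (c : Fin L → ι → F) : mpMap B (curry (mpMap A c)) = mpMap (A * B) c := by
  refine curry_injective (funext fun j => ?_)
  simp only [curry_mpMap, Finset.smul_sum, smul_smul, Matrix.mul_apply, Finset.sum_smul]
  rw [Finset.sum_comm]
  simp only [mul_comm]

theorem mpMap_one (c : Fin N → ι → F) : mpMap (1 : Matrix (Fin N) (Fin N) F) c = uncurry c := by
  refine curry_injective (funext fun j => ?_)
  simp [curry_mpMap, Matrix.one_apply]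

theorem curry_mpMap_inv_curry_mpMap {A : Matrix (Fin N) (Fin N) F} (hA : IsUnit A.det)
    (c : Fin N → ι → F) : curry (mpMap A⁻¹ (curry (mpMap A c))) = c := by
  rw [mpMap_curry_mpMap, A.mul_nonsing_inv hA, mpMap_one, curry_uncurry]

theorem mpMap_injective {A : Matrix (Fin N) (Fin N) F} (hA : IsUnit A.det) :
    Injective (mpMap A : (Fin N → ι → F) → _) :=
  LeftInverse.injective (g := fun y => curry (mpMap A⁻¹ (curry y)))
    (curry_mpMap_inv_curry_mpMap hA)

theorem finrank_matrixProductCode (Cs : Fin N → Submodule F (ι → F))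
    {A : Matrix (Fin N) (Fin N) F} (hA : IsUnit A.det) :
    Module.finrank F (matrixProductCode Cs A) = ∑ l, Module.finrank F (Cs l) := by
  rw [matrixProductCode, ← finrank_pi_univ,
    ← (Submodule.equivMapOfInjective _ (mpMap_injective hA) _).finrank_eq]

theorem finrank_matrixProductCode_update (D E : Submodule F (ι → F)) (l : Fin N)
    {A : Matrix (Fin N) (Fin N) F} (hA : IsUnit A.det) :
    Module.finrank F (matrixProductCode (update (fun _ => D) l E) A) =
      (N - 1) * Module.finrank F D + Module.finrank F E := by
  have hfinrank : ∀ i, Module.finrank F (update (fun _ => D) l E i) =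
      update (fun _ => Module.finrank F D) l (Module.finrank F E) i :=
    apply_update (fun _ (p : Submodule F (ι → F)) => Module.finrank F p) _ l E
  rw [finrank_matrixProductCode _ hA, Finset.sum_congr rfl fun i _ => hfinrank i,
    Finset.sum_update_of_mem (Finset.mem_univ l), add_comm, Finset.sum_const, smul_eq_mul,
    ← Finset.compl_eq_univ_sdiff, Finset.card_compl, Finset.card_singleton, Fintype.card_fin]

theorem curry_mem_of_mem_matrixProductCode {Cs : Fin M → Submodule F (ι → F)}
    {D : Submodule F (ι → F)} (hD : ∀ l, Cs l ≤ D) {A : Matrix (Fin M) (Fin N) F}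
    {y : Fin N × ι → F} (hy : y ∈ matrixProductCode Cs A) (j : Fin N) : curry y j ∈ D := by
  obtain ⟨c, hc, rfl⟩ := hy
  rw [curry_mpMap]
  exact D.sum_mem fun l _ => D.smul_mem _ (hD l (hc l trivial))

theorem uncurry_mem_matrixProductCode {Cs : Fin N → Submodule F (ι → F)}
    {A : Matrix (Fin N) (Fin N) F} (hA : IsUnit A.det) {v : Fin N → ι → F}
    (hv : ∀ j l, v j ∈ Cs l) : uncurry v ∈ matrixProductCode Cs A := by
  refine ⟨curry (mpMap A⁻¹ v), fun l _ => ?_, ?_⟩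
  · rw [curry_mpMap]
    exact (Cs l).sum_mem fun j _ => (Cs l).smul_mem _ (hv j l)
  · rw [mpMap_curry_mpMap, A.nonsing_inv_mul hA, mpMap_one]

theorem curry_mem_of_curry_eq_zero {Cs : Fin N → Submodule F (ι → F)}
    {A : Matrix (Fin N) (Fin N) F} (hA : IsUnit A.det) {y : Fin N × ι → F}
    (hy : y ∈ matrixProductCode Cs A) {j l : Fin N} (hjl : A⁻¹ j l ≠ 0)
    (hzero : ∀ i ≠ j, curry y i = 0) : curry y j ∈ Cs l := by
  obtain ⟨c, hc, rfl⟩ := hy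
  have hcl : c l = A⁻¹ j l • curry (mpMap A c) j :=
    calc c l = ∑ i, A⁻¹ i l • curry (mpMap A c) i := by
          rw [← curry_mpMap, curry_mpMap_inv_curry_mpMap hA]
      _ = A⁻¹ j l • curry (mpMap A c) j :=
          Fintype.sum_eq_single j fun i hi => by rw [hzero i hi, smul_zero]
  rw [← (Cs l).smul_mem_iff hjl, ← hcl]
  exact hc l trivial

end Blocks

section NonsingularByColumns

variable {F : Type} [Field F] {N : ℕ} {A : Matrix (Fin N) (Fin N) F}

theorem IsNSC.isUnit_det (hA : IsNSC A) : IsUnit A.det :=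
  (hA N le_rfl id strictMono_id).isUnit

theorem IsNSC.inv_apply_last_ne_zero (hA : IsNSC A) {l : Fin N} (hl : (l : ℕ) + 1 = N)
    (j : Fin N) : A⁻¹ j l ≠ 0 := by
  obtain ⟨M, rfl⟩ : ∃ M, N = M + 1 := ⟨l, hl.symm⟩
  obtain rfl : l = Fin.last M := Fin.ext (by simpa using hl)
  have hminor : (A.submatrix (Fin.last M).succAbove j.succAbove).det ≠ 0 := by
    rw [Fin.succAbove_last]
    exact hA M M.le_succ j.succAbove (Fin.strictMono_succAbove j)
  rw [Matrix.inv_def, Matrix.smul_apply, Matrix.adjugate_fin_succ_eq_det_submatrix]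
  exact smul_ne_zero hA.isUnit_det.ringInverse.ne_zero
    (mul_ne_zero (pow_ne_zero _ (neg_ne_zero.2 one_ne_zero)) hminor)

end NonsingularByColumns

section HammingNorm

variable {κ ι R : Type*} [Fintype κ] [Fintype ι] [Zero R] [DecidableEq R]

theorem hammingNorm_eq_sum_curry (y : κ × ι → R) :
    hammingNorm y = ∑ j, hammingNorm (curry y j) := by
  simp only [hammingNorm, Finset.card_filter]
  exact Fintype.sum_prod_type _

theorem hammingNorm_uncurry_single [DecidableEq κ] (j : κ) (x : ι → R) :
    hammingNorm (uncurry (Pi.single j x : κ → ι → R)) = hammingNorm x := by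
  rw [hammingNorm_eq_sum_curry, curry_uncurry, Fintype.sum_eq_single j, Pi.single_eq_same]
  intro i hi
  rw [Pi.single_eq_of_ne hi, hammingNorm_zero]

end HammingNorm

section Codes

variable {F : Type} [Field F] [DecidableEq F] {ι : Type} [Fintype ι] {N : ℕ}

theorem minWtGe_matrixProductCode {Cs : Fin N → Submodule F (ι → F)} {D : Submodule F (ι → F)}
    {A : Matrix (Fin N) (Fin N) F} {l : Fin N} {d e : ℕ} (hA : IsUnit A.det)
    (hAl : ∀ j, A⁻¹ j l ≠ 0) (hCs : ∀ i, Cs i ≤ D) (hD : minWtGe D d) (hl : minWtGe (Cs l) e)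
    (hde : e ≤ 2 * d) : minWtGe (matrixProductCode Cs A) e := by
  intro y hy hy0
  have hblock : ∀ j, curry y j ≠ 0 → d ≤ hammingNorm (curry y j) :=
    fun j => hD _ (curry_mem_of_mem_matrixProductCode hCs hy j)
  obtain ⟨j, hj⟩ : ∃ j, curry y j ≠ 0 := by
    contrapose! hy0
    exact curry_injective (funext hy0)
  rw [hammingNorm_eq_sum_curry]
  by_cases hsingle : ∀ i ≠ j, curry y i = 0
  · have hmem : curry y j ∈ Cs l := curry_mem_of_curry_eq_zero hA hy (hAl j) hsingle
    exact (hl _ hmem hj).trans (Finset.single_le_sum_of_canonicallyOrdered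
      (f := fun j => hammingNorm (curry y j)) (Finset.mem_univ j))
  · push Not at hsingle
    obtain ⟨i, hij, hi⟩ := hsingle
    calc e ≤ d + d := by rwa [← two_mul]
      _ ≤ hammingNorm (curry y i) + hammingNorm (curry y j) :=
        add_le_add (hblock i hi) (hblock j hj)
      _ ≤ ∑ j, hammingNorm (curry y j) :=
        Finset.add_le_sum (f := fun j => hammingNorm (curry y j)) (fun _ _ => Nat.zero_le _)
          (Finset.mem_univ i) (Finset.mem_univ j) hij

theorem minDistIs_matrixProductCode {Cs : Fin N → Submodule F (ι → F)} {D : Submodule F (ι → F)}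
    {A : Matrix (Fin N) (Fin N) F} {l : Fin N} {d e : ℕ} (hA : IsUnit A.det)
    (hAl : ∀ j, A⁻¹ j l ≠ 0) (hCs : ∀ i, Cs i ≤ D) (hCl : ∀ i, Cs l ≤ Cs i) (hD : minWtGe D d)
    (hl : minDistIs (Cs l) e) (hde : e ≤ 2 * d) : minDistIs (matrixProductCode Cs A) e := by
  obtain ⟨⟨x, hx, hx0, rfl⟩, hwt⟩ := hl
  have hnorm := hammingNorm_uncurry_single l x
  refine ⟨⟨uncurry (Pi.single l x), uncurry_mem_matrixProductCode hA fun j i => hCl i ?_, ?_,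
    hnorm⟩, minWtGe_matrixProductCode hA hAl hCs hD hwt hde⟩
  · obtain rfl | hj := eq_or_ne j l
    · rwa [Pi.single_eq_same]
    · rw [Pi.single_eq_of_ne hj]
      exact zero_mem _
  · rwa [← hammingNorm_ne_zero_iff, hnorm, hammingNorm_ne_zero_iff]

theorem minWtGe_punctureCode_iff (C : Submodule F (ι → F)) (S : Finset ι) (δ : ℕ) :
    minWtGe (punctureCode C S) δ ↔
      ∀ c ∈ C, (∃ i ∈ S, c i ≠ 0) → δ ≤ {i ∈ S | c i ≠ 0}.card := by
  have hcard : ∀ c : ι → F,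
      hammingNorm (LinearMap.funLeft F F (fun j : S => (j : ι)) c) = {i ∈ S | c i ≠ 0}.card := by
    intro c
    rw [hammingNorm, Finset.card_filter, Finset.card_filter]
    exact Finset.sum_coe_sort S fun i => if c i ≠ 0 then 1 else 0
  have hne : ∀ c : ι → F,
      LinearMap.funLeft F F (fun j : S => (j : ι)) c ≠ 0 ↔ ∃ i ∈ S, c i ≠ 0 := by
    intro c
    simp [ne_iff, LinearMap.funLeft_apply]
  simp only [minWtGe, punctureCode, Submodule.mem_map, forall_exists_index, and_imp,
    forall_apply_eq_imp_iff₂, hcard, hne]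

theorem symbolHasLocality.of_comp_mem {κ : Type} [Fintype κ] {C : Submodule F (κ → F)}
    {D : Submodule F (ι → F)} {r δ : ℕ} {i : ι} (hD : symbolHasLocality D r δ i) (f : ι ↪ κ)
    (hC : ∀ y ∈ C, y ∘ f ∈ D) : symbolHasLocality C r δ (f i) := by
  obtain ⟨S, hiS, hScard, hS⟩ := hD
  refine ⟨S.map f, Finset.mem_map_of_mem f hiS, by rwa [Finset.card_map], ?_⟩
  rw [minWtGe_punctureCode_iff] at hS ⊢
  intro y hy hne
  have hwt := hS (y ∘ f) (hC y hy) (by simpa using hne)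
  rwa [Finset.filter_map, Finset.card_map]

theorem isLRC_matrixProductCode {M : ℕ} {Cs : Fin M → Submodule F (ι → F)}
    {D : Submodule F (ι → F)} {r δ : ℕ} (hD : IsLRC D r δ) (hCs : ∀ l, Cs l ≤ D)
    (A : Matrix (Fin M) (Fin N) F) : IsLRC (matrixProductCode Cs A) r δ := fun ⟨j, i⟩ =>
  (hD i).of_comp_mem ⟨Prod.mk j, Prod.mk_right_injective j⟩
    fun _ hy => curry_mem_of_mem_matrixProductCode hCs hy j

end Codes

section SingletonBound

variable {r s w : ℕ}

theorem ceil_mul_sub_div (hw : 0 < w) (hs : s < r) :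
    ⌈((w * r - s : ℕ) : ℚ) / (r : ℚ)⌉ = (w : ℤ) := by
  have hle : s ≤ w * r := hs.le.trans (Nat.le_mul_of_pos_left r hw)
  have hr : (0 : ℚ) < r := by exact_mod_cast s.zero_le.trans_lt hs
  have hs' : (s : ℚ) < r := by exact_mod_cast hs
  rw [Int.ceil_eq_iff, lt_div_iff₀ hr, div_le_iff₀ hr]
  push_cast [Nat.cast_sub hle]
  constructor <;> linarith

theorem eq_optBound_iff {n δ : ℕ} {d : ℤ} (hw : 0 < w) (hs : s < r) :
    d = optBound n (w * r - s) r δ ↔ (n : ℤ) + δ = w * r - s + w * (δ - 1) + d := by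
  have hle : s ≤ w * r := hs.le.trans (Nat.le_mul_of_pos_left r hw)
  rw [optBound, ceil_mul_sub_div hw hs]
  push_cast [Nat.cast_sub hle]
  constructor <;> intro h <;> linarith

theorem add_eq_optBound_mul {n δ N t : ℕ} (hw : 0 < w) (hN : 0 < N) (hcond : N * s + t < r)
    (h : (δ : ℤ) = optBound n (w * r - s) r δ) :
    ((δ + t : ℕ) : ℤ) = optBound (N * n) (N * (w * r - s) - t) r δ := by
  have hsr : s < r := (Nat.le_mul_of_pos_left s hN).trans_lt (by omega)
  have hdim : N * (w * r - s) - t = N * w * r - (N * s + t) := by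
    rw [Nat.mul_sub, ← mul_assoc, Nat.sub_sub]
  rw [eq_optBound_iff hw hsr] at h
  rw [hdim, eq_optBound_iff (Nat.mul_pos hN hw) hcond]
  push_cast
  linear_combination (N : ℤ) * h

end SingletonBound

theorem ite_lt_pred_eq_update {α : Type*} {N : ℕ} {l : Fin N} (hl : (l : ℕ) + 1 = N) (a b : α) :
    (fun i : Fin N => if (i : ℕ) < N - 1 then a else b) = update (fun _ => a) l b := by
  ext i
  rw [update_apply]
  grind

theorem square_matrixProduct_optimal_general {F : Type} [Field F] [DecidableEq F] {ι : Type}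
    [Fintype ι] {r δ w N s t : ℕ} (hw : 0 < w) (ht : t ≤ δ) {C1 CN : Submodule F (ι → F)}
    (hsub : CN ≤ C1) (hC1 : IsOptimalLRC C1 (w * r - s) δ r δ)
    (hkN : Module.finrank F CN = w * r - s - t) (hdN : minDistIs CN (δ + t))
    {A : Matrix (Fin N) (Fin N) F} (hA : IsUnit A.det) {l : Fin N} (hAl : ∀ j, A⁻¹ j l ≠ 0)
    (hcond : N * s + t < r) :
    IsOptimalLRC (matrixProductCode (update (fun _ => C1) l CN) A)
      (N * (w * r - s) - t) (δ + t) r δ := by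
  obtain ⟨hLRC, hk, ⟨-, hwt⟩, hopt⟩ := hC1
  have hle_C1 : ∀ i, update (fun _ => C1) l CN i ≤ C1 :=
    update_le_iff.2 ⟨hsub, fun _ _ => le_rfl⟩
  have hCN_le : ∀ i, CN ≤ update (fun _ => C1) l CN i :=
    le_update_iff.2 ⟨le_rfl, fun _ _ => hsub⟩
  refine ⟨isLRC_matrixProductCode hLRC hle_C1 A, ?_, ?_, ?_⟩
  · have hdim : t ≤ w * r - s := by
      have hs : s ≤ N * s := Nat.le_mul_of_pos_left s l.pos
      have hr : r ≤ w * r := Nat.le_mul_of_pos_left r hw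
      omega
    rw [finrank_matrixProductCode_update C1 CN l hA, hk, hkN, ← Nat.add_sub_assoc hdim,
      ← Nat.add_one_mul, Nat.sub_add_cancel l.pos]
  · exact minDistIs_matrixProductCode hA hAl hle_C1 (by rwa [update_self]) hwt
      (by rwa [update_self]) (by omega)
  · rw [Fintype.card_prod, Fintype.card_fin]
    exact add_eq_optBound_mul hw l.pos hcond hopt

/-- Theorem 2: with `k = wr - s`, optimal `(r,δ)`-LRCs
`C_1 = ⋯ = C_{N-1}` of parameters `[n, k, δ]_q` and `C_N ⊆ C_1` of parameters
`[n, k - t, δ + t]_q`, and an `N × N` NSC matrix `A`, if `Ns + t < r` then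
`(C_1, …, C_N) · A` is an optimal `(r,δ)`-LRC with parameters `[Nn, Nk - t, δ + t]_q`. -/
theorem square_matrixProduct_optimal
    (q : ℕ) (hq : IsPrimePow q)
    (F : Type) [Field F] [Fintype F] [DecidableEq F] (hF : Fintype.card F = q)
    (n r δ w N s t : ℕ) (hδ : 1 < δ) (hr : 0 < r) (hw : 0 < w) (hN : 1 < N) (hNq : N ≤ q)
    (hs : s < r) (ht : t ≤ δ)
    (C1 CN : Submodule F (Fin n → F)) (hsub : CN ≤ C1)
    (hC1 : IsOptimalLRC C1 (w * r - s) δ r δ)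
    (hCN : IsOptimalLRC CN (w * r - s - t) (δ + t) r δ)
    (A : Matrix (Fin N) (Fin N) F) (hA : IsNSC A)
    (hcond : N * s + t < r) :
    IsOptimalLRC
      (matrixProductCode (fun i : Fin N => if (i : ℕ) < N - 1 then C1 else CN) A)
      (N * (w * r - s) - t) (δ + t) r δ := by
  obtain ⟨l, hl⟩ : ∃ l : Fin N, (l : ℕ) + 1 = N := ⟨⟨N - 1, by omega⟩, Nat.sub_add_cancel hN.le⟩
  rw [ite_lt_pred_eq_update hl]
  exact square_matrixProduct_optimal_general hw ht hsub hC1 hCN.2.1 hCN.2.2.1 hA.isUnit_det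
    (hA.inv_apply_last_ne_zero hl) hcond

end LRCPaper
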